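/- Suppose the first syzygy of R_S is S-strongly flat. Given a short exact sequence 0 → A → B → C → 0 of R-modules, S-sfd(C) ≤ max{S-sfd(B), S-sfd(A) + 1}. -/

import Mathlib

open CategoryTheory

universe u

variable (R : Type u) [CommRing R]

/-- `Ext^n_R(M, N) = 0`. -/
def extVanish (n : ℕ) (M N : Type u) [AddCommGroup M] [Module R M]
    [AddCommGroup N] [Module R N] : Prop :=
  Subsingleton (((Ext R (ModuleCat.{u} R) n).obj
    (Opposite.op (ModuleCat.of R M))).obj (ModuleCat.of R N))

/-- `C` is `S`-weakly cotorsion if `Ext^1_R(R_S, C) = 0`. -/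
def IsWeaklyCotorsion (S : Submonoid R) (C : Type u) [AddCommGroup C] [Module R C] : Prop :=
  extVanish R 1 (Localization S) C

/-- `F` is `S`-strongly flat if `Ext^1_R(F, C) = 0` for all `S`-weakly cotorsion `C`. -/
def IsStronglyFlat (S : Submonoid R) (F : Type u) [AddCommGroup F] [Module R F] : Prop :=
  ∀ (C : Type u) [AddCommGroup C] [Module R C], IsWeaklyCotorsion R S C → extVanish R 1 F C

/-- The `S`-strongly flat dimension of `M`: the smallest `n` with
`Ext^{n+1}_R(M, C) = 0` for every `S`-weakly cotorsion `C`, or `∞` otherwise. -/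
noncomputable def sfdim (S : Submonoid R) (M : Type u) [AddCommGroup M] [Module R M] : ℕ∞ :=
  sInf {n : ℕ∞ | ∃ m : ℕ, n = m ∧
    ∀ (C : Type u) [AddCommGroup C] [Module R C],
      IsWeaklyCotorsion R S C → extVanish R (m + 1) M C}

open CategoryTheory Limits in
/-- The vanishing used in the statement agrees with vanishing of `Abelian.Ext`. -/
lemma extVanish_succ_iff (n : ℕ) (M N : Type u) [AddCommGroup M] [Module R M]
    [AddCommGroup N] [Module R N] :
    extVanish R (n + 1) M N ↔
      Subsingleton (Abelian.Ext (ModuleCat.of R M) (ModuleCat.of R N) (n + 1)) := by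
  let Q : ProjectiveResolution (ModuleCat.of R M) := projectiveResolution _
  have h1 : extVanish R (n + 1) M N ↔
      ∀ (f : Q.complex.X (n + 1) ⟶ ModuleCat.of R N), Q.complex.d (n + 2) (n + 1) ≫ f = 0 →
        ∃ (g : Q.complex.X n ⟶ ModuleCat.of R N), Q.complex.d (n + 1) n ≫ g = f := by
    unfold extVanish
    rw [← ModuleCat.isZero_iff_subsingleton, (Q.isoExt (n + 1) _).isZero_iff,
      ← HomologicalComplex.exactAt_iff_isZero_homology,
      HomologicalComplex.exactAt_iff' _ n (n + 1) (n + 2) (by simp) (by simp),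
      ShortComplex.moduleCat_exact_iff]
    rfl
  rw [h1]
  constructor
  · intro h
    refine subsingleton_of_forall_eq 0 fun x => ?_
    obtain ⟨f, hf, rfl⟩ := Q.extMk_surjective x (n + 2) rfl
    rw [Q.extMk_eq_zero_iff f (n + 2) rfl hf n rfl]
    exact h f hf
  · intro h f hf
    rw [← Q.extMk_eq_zero_iff f (n + 2) rfl hf n rfl]
    exact Subsingleton.elim _ _

open CategoryTheory Limits in
/-- Exactness in the middle of the contravariant sequence. -/
lemma extVanish_right (n : ℕ) {A B C : Type u} [AddCommGroup A] [Module R A]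
    [AddCommGroup B] [Module R B] [AddCommGroup C] [Module R C] (f : A →ₗ[R] B) (g : B →ₗ[R] C)
    (hf : Function.Injective f) (hg : Function.Surjective g) (hfg : Function.Exact f g)
    (D : Type u) [AddCommGroup D] [Module R D]
    (hA : extVanish R (n + 1) A D) (hB : extVanish R (n + 2) B D) :
    extVanish R (n + 2) C D := by
  rw [extVanish_succ_iff] at *
  let T : ShortComplex (ModuleCat.{u} R) := ShortComplex.mk (ModuleCat.ofHom f)
    (ModuleCat.ofHom g) (by ext x; exact hfg.apply_apply_eq_zero x)
  have hT : T.ShortExact := ModuleCat.shortComplex_shortExact T hfg hf hg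
  refine subsingleton_of_forall_eq 0 fun x => ?_
  obtain ⟨y, hy⟩ := Abelian.Ext.contravariant_sequence_exact₃ hT (ModuleCat.of R D) x
    (@Subsingleton.elim _ hB _ _) (n₀ := n + 1) (by omega)
  rw [← hy, @Subsingleton.elim _ hA y 0, Abelian.Ext.comp_zero]

open CategoryTheory Limits in
/-- Every module embeds in an injective, giving dimension shifting in the second variable. -/
lemma exists_shift (D : Type u) [AddCommGroup D] [Module R D] :
    ∃ (E : ModuleCat.{u} R), ∀ (n : ℕ) (M : Type u) [AddCommGroup M] [Module R M],
      extVanish R (n + 1) M E ↔ extVanish R (n + 2) M D := by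
  let j := Injective.ι (ModuleCat.of R D)
  let T : ShortComplex (ModuleCat.{u} R) := ShortComplex.mk j (cokernel.π j) (by simp)
  have hT : T.ShortExact :=
    { exact := ShortComplex.exact_cokernel j
      mono_f := inferInstanceAs (Mono j)
      epi_g := inferInstanceAs (Epi (cokernel.π j)) }
  have hI : Injective T.X₂ := inferInstanceAs (Injective (Injective.under _))
  refine ⟨cokernel j, fun n M _ _ => ?_⟩
  rw [extVanish_succ_iff, extVanish_succ_iff]
  constructor
  · intro h
    refine subsingleton_of_forall_eq 0 fun x => ?_
    obtain ⟨y, hy⟩ := Abelian.Ext.covariant_sequence_exact₁ (ModuleCat.of R M) hT x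
      (Abelian.Ext.eq_zero_of_injective _) (n₀ := n + 1) rfl
    rw [← hy, @Subsingleton.elim _ h y 0, Abelian.Ext.zero_comp]
  · intro h
    refine subsingleton_of_forall_eq 0 fun x => ?_
    obtain ⟨y, hy⟩ := Abelian.Ext.covariant_sequence_exact₃ (ModuleCat.of R M) hT x
      (n₁ := n + 2) rfl (@Subsingleton.elim _ h _ _)
    rw [← hy, Abelian.Ext.eq_zero_of_injective y, Abelian.Ext.zero_comp]

open CategoryTheory Limits in
lemma extVanish_of_projective (n : ℕ) (P D : Type u) [AddCommGroup P] [Module R P]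
    [AddCommGroup D] [Module R D] (hP : Module.Projective R P) : extVanish R (n + 1) P D := by
  have : Projective (ModuleCat.of R P) := (IsProjective.iff_projective P).mp hP
  rw [extVanish_succ_iff]
  exact subsingleton_of_forall_eq 0 fun x => Abelian.Ext.eq_zero_of_projective x

/-- All `Ext^{m+1}(M, -)` vanish on weakly cotorsion modules. -/
def VanAt (S : Submonoid R) (m : ℕ) (M : Type u) [AddCommGroup M] [Module R M] : Prop :=
  ∀ (C : Type u) [AddCommGroup C] [Module R C],
      IsWeaklyCotorsion R S C → extVanish R (m + 1) M C

lemma sfdim_le_of_vanAt (S : Submonoid R) (m : ℕ) (M : Type u) [AddCommGroup M] [Module R M]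
    (h : VanAt R S m M) : sfdim R S M ≤ m :=
  sInf_le ⟨m, rfl, h⟩

lemma exists_vanAt (S : Submonoid R) (M : Type u) [AddCommGroup M] [Module R M]
    (h : sfdim R S M ≠ ⊤) : ∃ m : ℕ, sfdim R S M = m ∧ VanAt R S m M := by
  have hne : {n : ℕ∞ | ∃ m : ℕ, n = m ∧
    ∀ (C : Type u) [AddCommGroup C] [Module R C],
      IsWeaklyCotorsion R S C → extVanish R (m + 1) M C}.Nonempty := by
    by_contra hc
    rw [Set.not_nonempty_iff_eq_empty] at hc
    apply h
    unfold sfdim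
    rw [hc, sInf_empty]
  exact csInf_mem hne

/-- If the first syzygy of `R_S` is `S`-strongly flat, then for a short exact
sequence `0 → A → B → C → 0` one has `S-sfd(C) ≤ max{S-sfd(B), S-sfd(A) + 1}`. -/
theorem sfdim_right_le_max (S : Submonoid R) (H P : Type u)
    [AddCommGroup H] [Module R H] [AddCommGroup P] [Module R P]
    (i : H →ₗ[R] P) (p : P →ₗ[R] Localization S)
    (hi : Function.Injective i) (hp : Function.Surjective p) (hip : Function.Exact i p)
    (hP : Module.Projective R P) (hH : IsStronglyFlat R S H)
    (A B C : Type u) [AddCommGroup A] [Module R A] [AddCommGroup B] [Module R B]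
    [AddCommGroup C] [Module R C] (f : A →ₗ[R] B) (g : B →ₗ[R] C)
    (hf : Function.Injective f) (hg : Function.Surjective g) (hfg : Function.Exact f g) :
    sfdim R S C ≤ max (sfdim R S B) (sfdim R S A + 1) := by
  have hstep : ∀ (m : ℕ) (M : Type u) [AddCommGroup M] [Module R M],
      VanAt R S m M → VanAt R S (m + 1) M := by
    intro m M _ _ h D _ _ hD
    obtain ⟨E, hE⟩ := exists_shift R D
    refine (hE m M).mp (h E ?_)
    exact (hE 0 _).mpr (extVanish_right R 0 i p hi hp hip D (hH D hD)
      (extVanish_of_projective R 1 P D hP))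
  have hmono : ∀ (M : Type u) [AddCommGroup M] [Module R M] (m k : ℕ), m ≤ k →
      VanAt R S m M → VanAt R S k M := by
    intro M _ _ m k hk h
    induction k, hk using Nat.le_induction with
    | base => exact h
    | succ k _ ih => exact hstep k M ih
  by_cases hB : sfdim R S B = ⊤
  · simp [hB]
  by_cases hA : sfdim R S A = ⊤
  · simp [hA]
  obtain ⟨b, hb, hB'⟩ := exists_vanAt R S B hB
  obtain ⟨a, ha, hA'⟩ := exists_vanAt R S A hA
  rw [hb, ha]
  have key : VanAt R S (max (b - 1) a + 1) C := fun D _ _ hD =>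
    extVanish_right R (max (b - 1) a) f g hf hg hfg D
      (hmono A a _ (le_max_right _ _) hA' D hD)
      (hmono B b _ (by omega) hB' D hD)
  rcases Nat.lt_or_ge a b with hab | hab
  · refine (sfdim_le_of_vanAt R S _ C key).trans (le_max_of_le_left ?_)
    have : max (b - 1) a + 1 ≤ b := by omega
    exact_mod_cast this
  · refine (sfdim_le_of_vanAt R S _ C key).trans (le_max_of_le_right ?_)
    have : max (b - 1) a + 1 ≤ a + 1 := by omega
    exact_mod_cast this
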